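/- arXiv:2109.13450 — 6 statements merged into one kernel-verified Lean document; each statement's English description precedes it below -/
import Mathlib

section
/- For every real constant c with 0 < c < 1, the ratio γ(s, c·s)/Γ(s) tends to 0 as s → +∞ (s ranging over the positive reals). -/
open Filter Topology

/-- The lower incomplete gamma function `γ(s,x) = ∫₀ˣ t^(s-1) e^(-t) dt`. -/
noncomputable def lowerGamma (s x : ℝ) : ℝ := ∫ t in (0:ℝ)..x, t ^ (s - 1) * Real.exp (-t)

lemma lowerGamma_bound (c : ℝ) (hc0 : 0 < c) (hc1 : c < 1) (s : ℝ) (hs : 0 < s) :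
    lowerGamma s (c * s) ≤ Real.exp ((1 - c) * s) * (c ^ s * Real.Gamma s) := by
  have hr : 0 < 1 / c := by positivity
  have hG := Real.Gamma_pos_of_pos hs
  have key := Real.integral_rpow_mul_exp_neg_mul_Ioi hs hr
  rw [one_div_one_div] at key
  have hint : MeasureTheory.IntegrableOn
      (fun t : ℝ => t ^ (s - 1) * Real.exp (-(1 / c * t))) (Set.Ioi 0) := by
    by_contra h
    rw [MeasureTheory.integral_undef h] at key
    have : 0 < c ^ s * Real.Gamma s := by positivity
    linarith
  have hint1 : MeasureTheory.IntegrableOn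
      (fun t : ℝ => t ^ (s - 1) * Real.exp (-t)) (Set.Ioi 0) := by
    refine (Real.GammaIntegral_convergent hs).congr_fun (fun t _ => ?_) measurableSet_Ioi
    exact mul_comm _ _
  have hK := hint.const_mul (Real.exp ((1 - c) * s))
  rw [lowerGamma, intervalIntegral.integral_of_le (by positivity), ← key,
    ← MeasureTheory.integral_const_mul]
  refine (MeasureTheory.setIntegral_mono_on (hint1.mono_set Set.Ioc_subset_Ioi_self)
    (MeasureTheory.IntegrableOn.mono_set hK Set.Ioc_subset_Ioi_self) measurableSet_Ioc ?_).trans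
    (MeasureTheory.setIntegral_mono_set hK ?_ Set.Ioc_subset_Ioi_self.eventuallyLE)
  · intro t ht
    have h0 : 0 ≤ t ^ (s - 1) := Real.rpow_nonneg ht.1.le _
    have h1 : Real.exp (-t) ≤ Real.exp ((1 - c) * s) * Real.exp (-(1 / c * t)) := by
      rw [← Real.exp_add, Real.exp_le_exp]
      have e : (1 - c) * s + -(1 / c * t) - -t = (1 / c - 1) * (c * s - t) := by
        field_simp
        ring
      have h2 : 1 ≤ 1 / c := by rw [le_div_iff₀ hc0]; linarith
      have := mul_nonneg (sub_nonneg.2 h2) (sub_nonneg.2 ht.2)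
      linarith
    calc _ ≤ t ^ (s - 1) * (Real.exp ((1 - c) * s) * Real.exp (-(1 / c * t))) := by gcongr
      _ = _ := by ring
  · filter_upwards [MeasureTheory.ae_restrict_mem measurableSet_Ioi] with t ht
    have h0 : 0 ≤ t ^ (s - 1) := Real.rpow_nonneg (le_of_lt ht) _
    simp only [Pi.zero_apply]
    positivity

/-- For every `0 < c < 1`, `γ(s, c·s)/Γ(s) → 0` as `s → +∞`. -/
theorem lowerGamma_ratio_tendsto_zero (c : ℝ) (hc0 : 0 < c) (hc1 : c < 1) :
    Tendsto (fun s : ℝ => lowerGamma s (c * s) / Real.Gamma s) atTop (𝓝 0) := by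
  have hlog : 1 - c + Real.log c < 0 := by
    have := Real.log_lt_sub_one_of_pos hc0 hc1.ne
    linarith
  have hlim : Tendsto (fun s : ℝ => Real.exp ((1 - c + Real.log c) * s)) atTop (𝓝 0) :=
    Real.tendsto_exp_atBot.comp (tendsto_id.const_mul_atTop_of_neg hlog)
  refine tendsto_of_tendsto_of_tendsto_of_le_of_le' tendsto_const_nhds hlim ?_ ?_
  · filter_upwards [eventually_gt_atTop 0] with s hs
    refine div_nonneg ?_ (Real.Gamma_pos_of_pos hs).le
    refine intervalIntegral.integral_nonneg (by positivity) fun t ht => ?_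
    exact mul_nonneg (Real.rpow_nonneg ht.1 _) (Real.exp_pos _).le
  · filter_upwards [eventually_gt_atTop 0] with s hs
    rw [div_le_iff₀ (Real.Gamma_pos_of_pos hs)]
    refine (lowerGamma_bound c hc0 hc1 s hs).trans_eq ?_
    rw [Real.rpow_def_of_pos hc0, ← mul_assoc, ← Real.exp_add]
    ring_nf
end

section
/- For every real constant c' with c' > 1, the ratio Γ(s, c'·s)/Γ(s) tends to 0 as s → +∞ (s ranging over the positive reals). -/
open Filter Topology

/-- The upper incomplete gamma function `Γ(s,x) = ∫ₓ^∞ t^(s-1) e^(-t) dt`. -/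
noncomputable def upperGamma (s x : ℝ) : ℝ := ∫ t in Set.Ioi x, t ^ (s - 1) * Real.exp (-t)

/-- Chebyshev bound for the upper tail. -/
theorem upperGamma_ratio_le (c s : ℝ) (hc : 1 < c) (hs : 0 < s) :
    upperGamma s (c * s) / Real.Gamma s ≤ 1 / (c - 1) ^ 2 * s⁻¹ := by
  have i0 := Real.GammaIntegral_convergent hs
  have i1 := Real.GammaIntegral_convergent (show 0 < s + 1 by linarith)
  have i2 := Real.GammaIntegral_convergent (show 0 < s + 1 + 1 by linarith)
  have e0 := Real.Gamma_eq_integral hs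
  have e1 := Real.Gamma_eq_integral (show 0 < s + 1 by linarith)
  have e2 := Real.Gamma_eq_integral (show 0 < s + 1 + 1 by linarith)
  have g1 := Real.Gamma_add_one hs.ne'
  have g2 := Real.Gamma_add_one (show s + 1 ≠ 0 by linarith)
  have hG := Real.Gamma_pos_of_pos hs
  have hK : 0 < ((c - 1) * s) ^ 2 := by
    have : 0 < c - 1 := by linarith
    positivity
  have hJ := (i2.sub (i1.const_mul (2 * s))).add (i0.const_mul (s ^ 2))
  set F : ℝ → ℝ := fun t => (t - s) ^ 2 * (t ^ (s - 1) * Real.exp (-t)) with hF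
  have hpt : Set.EqOn (fun t : ℝ => (Real.exp (-t) * t ^ (s + 1 + 1 - 1)
      - 2 * s * (Real.exp (-t) * t ^ (s + 1 - 1))) + s ^ 2 * (Real.exp (-t) * t ^ (s - 1)))
      F (Set.Ioi 0) := by
    intro t ht
    have ht : 0 < t := ht
    have a1 : t ^ (s + 1 - 1) = t ^ (s - 1) * t := by
      rw [← Real.rpow_add_one ht.ne']; congr 1; ring
    have a2 : t ^ (s + 1 + 1 - 1) = t ^ (s - 1) * t * t := by
      rw [← a1, ← Real.rpow_add_one ht.ne']; congr 1; ring
    simp only [hF, a1, a2]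
    ring
  have hFi : MeasureTheory.IntegrableOn F (Set.Ioi 0) :=
    MeasureTheory.IntegrableOn.congr_fun hJ hpt measurableSet_Ioi
  have hFv : ∫ t in Set.Ioi 0, F t = s * Real.Gamma s := by
    rw [← MeasureTheory.setIntegral_congr_fun measurableSet_Ioi hpt,
      MeasureTheory.integral_add (f := fun t : ℝ => Real.exp (-t) * t ^ (s + 1 + 1 - 1)
        - 2 * s * (Real.exp (-t) * t ^ (s + 1 - 1))) (i2.sub (i1.const_mul (2 * s))) (i0.const_mul (s ^ 2)),
      MeasureTheory.integral_sub i2 (i1.const_mul (2 * s)),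
      MeasureTheory.integral_const_mul, MeasureTheory.integral_const_mul,
      ← e0, ← e1, ← e2, g2, g1]
    ring
  have hcs : 0 < c * s := by
    have : 0 < c := by linarith
    positivity
  have hsub : Set.Ioi (c * s) ⊆ Set.Ioi (0 : ℝ) := Set.Ioi_subset_Ioi hcs.le
  have i0' : MeasureTheory.IntegrableOn (fun t : ℝ => t ^ (s - 1) * Real.exp (-t))
      (Set.Ioi 0) := by
    simpa only [mul_comm] using i0
  have key : ((c - 1) * s) ^ 2 * upperGamma s (c * s) ≤ s * Real.Gamma s := by
    rw [← hFv, upperGamma, ← MeasureTheory.integral_const_mul]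
    refine le_trans (MeasureTheory.setIntegral_mono_on ((i0'.mono_set hsub).const_mul _)
      (hFi.mono_set hsub) measurableSet_Ioi ?_)
      (MeasureTheory.setIntegral_mono_set hFi ?_ hsub.eventuallyLE)
    · intro t ht
      have h0 : 0 < t := hsub ht
      have ht : c * s < t := ht
      refine mul_le_mul_of_nonneg_right (pow_le_pow_left₀ ?_ ?_ 2) (by positivity)
      · exact mul_nonneg (by linarith) hs.le
      · linarith
    · filter_upwards [MeasureTheory.ae_restrict_mem measurableSet_Ioi] with t ht
      have h0 : 0 < t := ht
      simp only [hF, Pi.zero_apply]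
      positivity
  rw [div_le_iff₀ hG]
  have : upperGamma s (c * s) ≤ s * Real.Gamma s / ((c - 1) * s) ^ 2 := by
    rw [le_div_iff₀ hK]; linarith
  refine this.trans (le_of_eq ?_)
  have : c - 1 ≠ 0 := by linarith
  field_simp

/-- For every `c' > 1`, `Γ(s, c'·s)/Γ(s) → 0` as `s → +∞`. -/
theorem upperGamma_ratio_tendsto_zero (c' : ℝ) (hc' : 1 < c') :
    Tendsto (fun s : ℝ => upperGamma s (c' * s) / Real.Gamma s) atTop (𝓝 0) := by
  have hlim : Tendsto (fun s : ℝ => 1 / (c' - 1) ^ 2 * s⁻¹) atTop (𝓝 0) := by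
    have h := (tendsto_inv_atTop_zero (𝕜 := ℝ)).const_mul (1 / (c' - 1) ^ 2)
    rwa [mul_zero] at h
  refine tendsto_of_tendsto_of_tendsto_of_le_of_le' tendsto_const_nhds hlim ?_ ?_
  · filter_upwards [eventually_gt_atTop 0] with s hs
    refine div_nonneg ?_ (Real.Gamma_pos_of_pos hs).le
    refine MeasureTheory.setIntegral_nonneg measurableSet_Ioi fun t ht => ?_
    have h1 : c' * s < t := ht
    have h0 : 0 < t := lt_trans (mul_pos (by linarith) hs) h1
    positivity
  · filter_upwards [eventually_gt_atTop 0] with s hs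
    exact upperGamma_ratio_le c' s hc' hs
end

section
/- Let β > 0, θ > 0 and ε ∈ [0,1]. Define c = (θ/β)·log(1 + β/θ) and c' = (1 + θ/β)·log(1 + β/θ). Then the quantity ε·γ(N, c·N)/Γ(N) + (1 − ε)·Γ(N, c'·N)/Γ(N) tends to 0 as the natural number N tends to infinity. -/
open Filter Topology

lemma chernoff_aux (a : ℝ) (ha : 0 < a) (N : ℕ) (hN : 1 ≤ N) (S : Set ℝ) (hS : MeasurableSet S)
    (hS0 : S ⊆ Set.Ioi 0) (h : ∀ t ∈ S, t * (1 / a - 1) ≤ (1 - a) * N) :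
    ∫ t in S, t ^ ((N : ℝ) - 1) * Real.exp (-t) ≤ (a * Real.exp (1 - a)) ^ N * Real.Gamma N := by
  have hNr : (0 : ℝ) < N := by exact_mod_cast hN
  have key : ∀ r : ℝ, 0 < r → MeasureTheory.IntegrableOn
      (fun t : ℝ => t ^ ((N : ℝ) - 1) * Real.exp (-(r * t))) (Set.Ioi 0) := by
    intro r hr
    by_contra hc
    have h1 := Real.integral_rpow_mul_exp_neg_mul_Ioi hNr hr
    rw [MeasureTheory.integral_undef hc] at h1
    have : 0 < (1 / r) ^ (N : ℝ) * Real.Gamma N := by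
      have := Real.Gamma_pos_of_pos hNr
      positivity
    linarith
  have hE : ∫ t in Set.Ioi (0 : ℝ), t ^ ((N : ℝ) - 1) * Real.exp (-(1 / a * t))
      = a ^ N * Real.Gamma N := by
    rw [Real.integral_rpow_mul_exp_neg_mul_Ioi hNr (by positivity), one_div_one_div,
      Real.rpow_natCast]
  have hi1 := key (1 / a) (by positivity)
  have hi2 := key 1 one_pos
  simp only [one_mul] at hi2
  calc ∫ t in S, t ^ ((N : ℝ) - 1) * Real.exp (-t)
      ≤ ∫ t in S, Real.exp ((1 - a) * N) *
          (t ^ ((N : ℝ) - 1) * Real.exp (-(1 / a * t))) := by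
        refine MeasureTheory.setIntegral_mono_on (hi2.mono_set hS0)
          ((hi1.mono_set hS0).const_mul _) hS ?_
        intro t ht
        have ht0 : 0 < t := hS0 ht
        rw [mul_left_comm, ← Real.exp_add]
        refine mul_le_mul_of_nonneg_left (Real.exp_le_exp.2 ?_) (by positivity)
        have := h t ht
        linarith
    _ ≤ ∫ t in Set.Ioi (0 : ℝ), Real.exp ((1 - a) * N) *
          (t ^ ((N : ℝ) - 1) * Real.exp (-(1 / a * t))) := by
        refine MeasureTheory.setIntegral_mono_set (hi1.const_mul _) ?_
          (Filter.Eventually.of_forall hS0)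
        filter_upwards [MeasureTheory.ae_restrict_mem measurableSet_Ioi] with t ht
        have ht0 : 0 < t := ht
        simp only [Pi.zero_apply]
        positivity
    _ = (a * Real.exp (1 - a)) ^ N * Real.Gamma N := by
        rw [MeasureTheory.integral_const_mul, hE, mul_pow, ← Real.exp_nat_mul]
        rw [mul_comm (1 - a)]
        ring

lemma base_lt_one (a : ℝ) (ha : a ≠ 1) : a * Real.exp (1 - a) < 1 := by
  have h := Real.add_one_lt_exp (x := a - 1) (sub_ne_zero.2 ha)
  have h2 : Real.exp (a - 1) * Real.exp (1 - a) = 1 := by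
    rw [← Real.exp_add]; simp
  have h3 := Real.exp_pos (1 - a)
  nlinarith

lemma squeeze_aux (a : ℝ) (ha : 0 < a) (ha1 : a ≠ 1) (f : ℕ → ℝ) (h0 : ∀ N, 1 ≤ N → 0 ≤ f N)
    (h : ∀ N : ℕ, 1 ≤ N → f N ≤ (a * Real.exp (1 - a)) ^ N * Real.Gamma N) :
    Tendsto (fun N : ℕ => f N / Real.Gamma N) atTop (𝓝 0) := by
  refine squeeze_zero' ?_ ?_ (tendsto_pow_atTop_nhds_zero_of_lt_one
    (r := a * Real.exp (1 - a)) (by positivity) (base_lt_one a ha1))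
  · filter_upwards [eventually_ge_atTop 1] with N hN
    have hNr : (0 : ℝ) < N := by exact_mod_cast hN
    exact div_nonneg (h0 N hN) (Real.Gamma_pos_of_pos hNr).le
  · filter_upwards [eventually_ge_atTop 1] with N hN
    have hNr : (0 : ℝ) < N := by exact_mod_cast hN
    rw [div_le_iff₀ (Real.Gamma_pos_of_pos hNr)]
    exact h N hN

lemma lower_tendsto (a : ℝ) (ha : 0 < a) (ha1 : a < 1) :
    Tendsto (fun N : ℕ => lowerGamma N (a * N) / Real.Gamma N) atTop (𝓝 0) := by
  have e : ∀ N : ℕ, lowerGamma N (a * N)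
      = ∫ t in Set.Ioc 0 (a * N), t ^ ((N : ℝ) - 1) * Real.exp (-t) := fun N => by
    rw [lowerGamma, intervalIntegral.integral_of_le (by positivity)]
  refine squeeze_aux a ha ha1.ne _ ?_ ?_
  · intro N hN
    rw [e]
    refine MeasureTheory.setIntegral_nonneg measurableSet_Ioc fun t ht => ?_
    have := ht.1
    positivity
  · intro N hN
    rw [e]
    refine chernoff_aux a ha N hN _ measurableSet_Ioc (fun t ht => ht.1) fun t ht => ?_
    have h1 : 0 ≤ 1 / a - 1 := by
      rw [sub_nonneg, le_div_iff₀ ha]; linarith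
    calc t * (1 / a - 1) ≤ (a * N) * (1 / a - 1) := mul_le_mul_of_nonneg_right ht.2 h1
      _ = (1 - a) * N := by field_simp

lemma upper_tendsto (a : ℝ) (ha1 : 1 < a) :
    Tendsto (fun N : ℕ => upperGamma N (a * N) / Real.Gamma N) atTop (𝓝 0) := by
  have ha : 0 < a := by linarith
  have hs : ∀ N : ℕ, ∀ t ∈ Set.Ioi (a * (N : ℝ)), 0 < t := fun N t ht =>
    lt_of_le_of_lt (by positivity) ht
  refine squeeze_aux a ha ha1.ne' _ ?_ ?_
  · intro N hN
    refine MeasureTheory.setIntegral_nonneg measurableSet_Ioi fun t ht => ?_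
    have := hs N t ht
    positivity
  · intro N hN
    refine chernoff_aux a ha N hN _ measurableSet_Ioi (hs N) fun t ht => ?_
    have h1 : 1 / a - 1 ≤ 0 := by
      rw [sub_nonpos, div_le_iff₀ ha]; linarith
    calc t * (1 / a - 1) ≤ (a * N) * (1 / a - 1) :=
          mul_le_mul_of_nonpos_right (le_of_lt ht) h1
      _ = (1 - a) * N := by field_simp

/-- With `c = (θ/β)·log(1+β/θ)` and `c' = (1+θ/β)·log(1+β/θ)`, the detection error
probability `ε·γ(N,cN)/Γ(N) + (1-ε)·Γ(N,c'N)/Γ(N)` tends to `0` as `N → ∞`. -/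
theorem detection_error_tendsto_zero (β θ ε : ℝ) (hβ : 0 < β) (hθ : 0 < θ)
    (hε0 : 0 ≤ ε) (hε1 : ε ≤ 1) :
    Tendsto (fun N : ℕ =>
        ε * lowerGamma N ((θ / β * Real.log (1 + β / θ)) * N) / Real.Gamma N
        + (1 - ε) * upperGamma N (((1 + θ / β) * Real.log (1 + β / θ)) * N) / Real.Gamma N)
      atTop (𝓝 0) := by
  have hx : 0 < β / θ := by positivity
  have hinv : θ / β = 1 / (β / θ) := by rw [one_div_div]
  rw [hinv]
  generalize β / θ = x at hx
  have hl : 0 < Real.log (1 + x) := Real.log_pos (by linarith)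
  have h1 : Real.log (1 + x) < x := by
    have := Real.log_lt_sub_one_of_pos (x := 1 + x) (by linarith) (by linarith)
    linarith
  have h2 : x / (1 + x) < Real.log (1 + x) := by
    have h3 : (1 + x)⁻¹ < 1 := inv_lt_one_of_one_lt₀ (by linarith)
    have := Real.log_lt_sub_one_of_pos (x := (1 + x)⁻¹) (by positivity) h3.ne
    rw [Real.log_inv] at this
    have h4 : x / (1 + x) = 1 - (1 + x)⁻¹ := by field_simp; ring
    linarith
  have hL := lower_tendsto (1 / x * Real.log (1 + x)) (by positivity) (by
    rw [one_div, inv_mul_lt_iff₀ hx]; linarith)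
  have hU := upper_tendsto ((1 + 1 / x) * Real.log (1 + x)) (by
    rw [div_lt_iff₀ (by positivity)] at h2
    have : (1 + 1 / x) * Real.log (1 + x) = (Real.log (1 + x) * (1 + x)) / x := by
      field_simp; ring
    rw [this, lt_div_iff₀ hx]; linarith)
  have := (hL.const_mul ε).add (hU.const_mul (1 - ε))
  simpa only [mul_zero, add_zero, mul_div_assoc] using this
end

section
/- Fix an integer N ≥ 1, a real θ > 0 and ε ∈ [0,1]. The function P(β) = ε·γ(N, N·(θ/β)·log(1 + β/θ))/Γ(N) + (1 − ε)·Γ(N, N·(1 + θ/β)·log(1 + β/θ))/Γ(N) is strictly decreasing on (0, ∞). -/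
lemma aux_int (s : ℝ) (hs : 0 < s) :
    MeasureTheory.IntegrableOn (fun t : ℝ => t ^ (s - 1) * Real.exp (-t)) (Set.Ioi 0) := by
  have h := Real.GammaIntegral_convergent hs
  simpa only [mul_comm] using h

lemma aux_ii (s : ℝ) (hs : 0 < s) {x y : ℝ} (hx : 0 ≤ x) (hxy : x ≤ y) :
    IntervalIntegrable (fun t : ℝ => t ^ (s - 1) * Real.exp (-t)) MeasureTheory.volume x y := by
  rw [intervalIntegrable_iff_integrableOn_Ioc_of_le hxy]
  exact (aux_int s hs).mono_set (fun t ht => lt_of_le_of_lt hx ht.1)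

lemma aux_pos (s : ℝ) (hs : 0 < s) {x y : ℝ} (hx : 0 ≤ x) (hxy : x < y) :
    0 < ∫ t in x..y, t ^ (s - 1) * Real.exp (-t) := by
  apply intervalIntegral.intervalIntegral_pos_of_pos_on (aux_ii s hs hx hxy.le) _ hxy
  intro t ht
  have : 0 < t := lt_of_le_of_lt hx ht.1
  positivity

lemma lower_lt (s : ℝ) (hs : 0 < s) {x y : ℝ} (hx : 0 ≤ x) (hxy : x < y) :
    lowerGamma s x < lowerGamma s y := by
  have h := intervalIntegral.integral_add_adjacent_intervals (aux_ii s hs le_rfl hx)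
    (aux_ii s hs hx hxy.le)
  have := aux_pos s hs hx hxy
  unfold lowerGamma
  linarith

lemma upper_lt (s : ℝ) (hs : 0 < s) {x y : ℝ} (hx : 0 ≤ x) (hxy : x < y) :
    upperGamma s y < upperGamma s x := by
  have h := intervalIntegral.integral_interval_add_Ioi
    ((aux_int s hs).mono_set (Set.Ioi_subset_Ioi hx))
    ((aux_int s hs).mono_set (Set.Ioi_subset_Ioi (hx.trans hxy.le)))
  have := aux_pos s hs hx hxy
  unfold upperGamma
  linarith

lemma g_lt {u w : ℝ} (hu : 0 < u) (huw : u < w) :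
    Real.log (1 + w) / w < Real.log (1 + u) / u := by
  have h := strictConcaveOn_log_Ioi.secant_strict_mono (a := 1) (x := 1 + u) (y := 1 + w)
    (by simp) (by simp; linarith) (by simp; linarith) (by linarith) (by linarith) (by linarith)
  simpa using h

lemma h_lt {u w : ℝ} (hu : 0 < u) (huw : u < w) :
    (1 + 1 / u) * Real.log (1 + u) < (1 + 1 / w) * Real.log (1 + w) := by
  have key : ∀ v : ℝ, 0 < v → (Real.log (1 + v)⁻¹ - Real.log 1) / ((1 + v)⁻¹ - 1)
      = (1 + 1 / v) * Real.log (1 + v) := by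
    intro v hv
    have h1 : (1 + v)⁻¹ - 1 = - (v / (1 + v)) := by field_simp; ring
    rw [Real.log_inv, Real.log_one, h1]
    field_simp
    ring
  have hlt : (1 + w)⁻¹ < (1 + u)⁻¹ := by
    apply inv_strictAnti₀ <;> linarith
  have hu1 : (1 + u)⁻¹ < 1 := inv_lt_one_of_one_lt₀ (by linarith)
  have hw : 0 < w := hu.trans huw
  have h := strictConcaveOn_log_Ioi.secant_strict_mono (a := 1) (x := (1 + w)⁻¹)
    (y := (1 + u)⁻¹)
    (by simp) (by simp only [Set.mem_Ioi]; positivity) (by simp only [Set.mem_Ioi]; positivity)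
    (by linarith) (by linarith) hlt
  rwa [key u hu, key w hw] at h

/-- The activity detection error probability
`P(β) = ε·γ(N, N·(θ/β)·log(1+β/θ))/Γ(N) + (1-ε)·Γ(N, N·(1+θ/β)·log(1+β/θ))/Γ(N)`
is strictly decreasing in the path-loss coefficient `β` on `(0,∞)`. -/
theorem detection_error_strictAntiOn (N : ℕ) (hN : 1 ≤ N) (θ ε : ℝ) (hθ : 0 < θ)
    (hε0 : 0 ≤ ε) (hε1 : ε ≤ 1) :
    StrictAntiOn (fun β : ℝ =>
        ε * lowerGamma N (N * (θ / β) * Real.log (1 + β / θ)) / Real.Gamma N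
        + (1 - ε) * upperGamma N (N * (1 + θ / β) * Real.log (1 + β / θ)) / Real.Gamma N)
      (Set.Ioi 0) := by
  intro a ha b hb hab
  have ha' : 0 < a := ha
  have hb' : 0 < b := hb
  have hNpos : (0 : ℝ) < N := by exact_mod_cast hN
  have hG : 0 < Real.Gamma N := Real.Gamma_pos_of_pos hNpos
  have hua : 0 < a / θ := by positivity
  have hub : 0 < b / θ := by positivity
  have huv : a / θ < b / θ := by gcongr
  have hla : 0 < Real.log (1 + a / θ) := Real.log_pos (by linarith)
  have hlb : 0 < Real.log (1 + b / θ) := Real.log_pos (by linarith)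
  have e1 : ∀ c : ℝ, N * (θ / c) * Real.log (1 + c / θ)
      = N * (Real.log (1 + c / θ) / (c / θ)) := by
    intro c
    rw [div_div_eq_mul_div]; ring
  have e2 : ∀ c : ℝ, N * (1 + θ / c) * Real.log (1 + c / θ)
      = N * ((1 + 1 / (c / θ)) * Real.log (1 + c / θ)) := by
    intro c
    rw [one_div_div]; ring
  have L : lowerGamma N (N * (θ / b) * Real.log (1 + b / θ))
      < lowerGamma N (N * (θ / a) * Real.log (1 + a / θ)) := by
    apply lower_lt _ hNpos (by positivity)
    rw [e1, e1]
    exact mul_lt_mul_of_pos_left (g_lt hua huv) hNpos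
  have U : upperGamma N (N * (1 + θ / b) * Real.log (1 + b / θ))
      < upperGamma N (N * (1 + θ / a) * Real.log (1 + a / θ)) := by
    apply upper_lt _ hNpos (by positivity)
    rw [e2, e2]
    exact mul_lt_mul_of_pos_left (h_lt hua huv) hNpos
  show _ / _ + _ / _ < _ / _ + _ / _
  rw [← add_div, ← add_div]
  apply div_lt_div_of_pos_right _ hG
  rcases hε0.eq_or_lt with h0 | h0
  · subst h0; linarith
  · have h1 := mul_lt_mul_of_pos_left L h0
    have h2 := mul_le_mul_of_nonneg_left U.le (sub_nonneg.2 hε1)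
    linarith
end

section
/- Fix an integer N ≥ 1, a real θ > 0 and ε ∈ (0,1), and let P(β) = ε·γ(N, N·(θ/β)·log(1 + β/θ))/Γ(N) + (1 − ε)·Γ(N, N·(1 + θ/β)·log(1 + β/θ))/Γ(N) for β > 0. Then P(β) → ε·γ(N,N)/Γ(N) + (1 − ε)·Γ(N,N)/Γ(N) =: L₀ as β → 0⁺, P(β) → 0 as β → ∞, and for every threshold P₀ ∈ (0, L₀) the equation P(β) = P₀ has a unique solution β > 0. -/
open Filter Topology

lemma aux_cont (s : ℝ) (hs : 1 ≤ s) : Continuous (fun t : ℝ => t ^ (s - 1) * Real.exp (-t)) :=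
  (Real.continuous_rpow_const (by linarith)).mul (Real.continuous_exp.comp continuous_neg)

lemma aux_lower_cont (s : ℝ) (hs : 1 ≤ s) : Continuous (lowerGamma s) := by
  unfold lowerGamma
  exact intervalIntegral.continuous_primitive
    (fun a b => (aux_cont s hs).intervalIntegrable a b) 0

lemma aux_lower_mono (s : ℝ) (hs : 1 ≤ s) : StrictMonoOn (lowerGamma s) (Set.Ici 0) := by
  intro x hx y hy hxy
  have hx' : (0:ℝ) ≤ x := hx
  have h1 : lowerGamma s y - lowerGamma s x = ∫ t in x..y, t ^ (s - 1) * Real.exp (-t) :=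
    intervalIntegral.integral_interval_sub_left ((aux_cont s hs).intervalIntegrable _ _)
      ((aux_cont s hs).intervalIntegrable _ _)
  have h2 : 0 < ∫ t in x..y, t ^ (s - 1) * Real.exp (-t) := by
    apply intervalIntegral.intervalIntegral_pos_of_pos_on
      ((aux_cont s hs).intervalIntegrable _ _) _ hxy
    intro t ht
    have : 0 < t := lt_of_le_of_lt hx' ht.1
    positivity
  linarith

lemma aux_integrable (s : ℝ) (hs : 1 ≤ s) : MeasureTheory.IntegrableOn
    (fun t : ℝ => t ^ (s - 1) * Real.exp (-t)) (Set.Ioi 0) := by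
  have := Real.GammaIntegral_convergent (s := s) (by linarith)
  simpa only [mul_comm] using this

lemma aux_gamma (s : ℝ) (hs : 1 ≤ s) :
    Real.Gamma s = ∫ t in Set.Ioi (0:ℝ), t ^ (s - 1) * Real.exp (-t) := by
  rw [Real.Gamma_eq_integral (by linarith)]
  simp only [mul_comm]

lemma aux_upper (s : ℝ) (hs : 1 ≤ s) (x : ℝ) (hx : 0 ≤ x) :
    upperGamma s x = Real.Gamma s - lowerGamma s x := by
  have hi := aux_integrable s hs
  have h := intervalIntegral.integral_interval_add_Ioi (a := 0) (b := x) hi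
    (hi.mono_set (Set.Ioi_subset_Ioi hx))
  rw [aux_gamma s hs, ← h]
  unfold upperGamma lowerGamma
  ring

lemma aux_lower_tendsto (s : ℝ) (hs : 1 ≤ s) :
    Tendsto (lowerGamma s) atTop (𝓝 (Real.Gamma s)) := by
  rw [aux_gamma s hs]
  exact MeasureTheory.intervalIntegral_tendsto_integral_Ioi 0 (aux_integrable s hs) tendsto_id

lemma aux_A_anti : StrictAntiOn (fun u : ℝ => Real.log (1 + u) / u) (Set.Ioi 0) := by
  intro x hx y hy hxy
  have hx' : (0:ℝ) < x := hx
  have hy' : (0:ℝ) < y := hy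
  have := strictConcaveOn_log_Ioi.secant_strict_mono (a := 1) (x := 1 + x) (y := 1 + y)
    (by simp) (by simp; linarith) (by simp; linarith) (by linarith) (by linarith) (by linarith)
  simpa using this

lemma aux_B_mono : StrictMonoOn (fun u : ℝ => (1 + u) * Real.log (1 + u) / u) (Set.Ioi 0) := by
  intro x hx y hy hxy
  have hx' : (0:ℝ) < x := hx
  have hy' : (0:ℝ) < y := hy
  have := Real.strictConvexOn_mul_log.secant_strict_mono (a := 1) (x := 1 + x) (y := 1 + y)
    (by simp) (by simp; linarith) (by simp; linarith) (by linarith) (by linarith) (by linarith)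
  simpa using this

lemma aux_A_zero : Tendsto (fun u : ℝ => Real.log (1 + u) / u) (𝓝[>] 0) (𝓝 1) := by
  have h : HasDerivAt (fun u : ℝ => Real.log (1 + u)) 1 0 := by
    have h1 : HasDerivAt (fun u : ℝ => 1 + u) 1 0 := (hasDerivAt_id (0:ℝ)).const_add 1
    simpa using h1.log (by simp)
  have h2 := hasDerivAt_iff_tendsto_slope.1 h
  have h3 := h2.mono_left (nhdsWithin_mono 0 (fun x (hx : 0 < x) => ne_of_gt hx) :
    𝓝[>] (0:ℝ) ≤ 𝓝[≠] 0)
  refine h3.congr fun u => ?_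
  simp [slope_def_field]

lemma aux_A_top : Tendsto (fun u : ℝ => Real.log (1 + u) / u) atTop (𝓝 0) := by
  have h := Real.tendsto_pow_log_div_mul_add_atTop 1 (-1) 1 one_ne_zero
  have h2 := h.comp (tendsto_atTop_add_const_left atTop (1:ℝ) tendsto_id)
  refine h2.congr fun u => ?_
  simp

lemma aux_B_top : Tendsto (fun u : ℝ => (1 + u) * Real.log (1 + u) / u) atTop atTop := by
  have h2 := Real.tendsto_log_atTop.comp (tendsto_atTop_add_const_left atTop (1:ℝ) tendsto_id)
  refine tendsto_atTop_mono' _ ?_ h2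
  filter_upwards [eventually_gt_atTop 0] with u hu
  have : 0 ≤ Real.log (1 + u) := Real.log_nonneg (by linarith)
  simp only [Function.comp, id]
  rw [le_div_iff₀ hu]
  nlinarith

lemma aux_cont_log : ContinuousOn (fun u : ℝ => Real.log (1 + u)) (Set.Ioi 0) := by
  apply ContinuousOn.log (by fun_prop)
  intro x hx
  have hx' : (0:ℝ) < x := hx
  positivity

lemma aux_core (N : ℕ) (hN : 1 ≤ N) (ε : ℝ) (hε0 : 0 < ε) (hε1 : ε < 1) (Q : ℝ → ℝ)
    (hQ : Q = fun u : ℝ => ε * lowerGamma N (N * (Real.log (1 + u) / u)) / Real.Gamma N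
        + (1 - ε) * (Real.Gamma N - lowerGamma N (N * ((1 + u) * Real.log (1 + u) / u)))
          / Real.Gamma N) :
    Tendsto Q (𝓝[>] 0)
      (𝓝 (ε * lowerGamma N N / Real.Gamma N
        + (1 - ε) * (Real.Gamma N - lowerGamma N N) / Real.Gamma N)) ∧
    Tendsto Q atTop (𝓝 0) ∧ StrictAntiOn Q (Set.Ioi 0) ∧ ContinuousOn Q (Set.Ioi 0) := by
  have hs : (1:ℝ) ≤ N := by exact_mod_cast hN
  have hN0 : (0:ℝ) < N := by linarith
  have hG : 0 < Real.Gamma N := Real.Gamma_pos_of_pos hN0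
  have hF := aux_lower_cont N hs
  subst hQ
  refine ⟨?_, ?_, ?_, ?_⟩
  · have hA : Tendsto (fun u : ℝ => N * (Real.log (1 + u) / u)) (𝓝[>] 0) (𝓝 (N:ℝ)) := by
      simpa using aux_A_zero.const_mul (N:ℝ)
    have hB : Tendsto (fun u : ℝ => N * ((1 + u) * Real.log (1 + u) / u)) (𝓝[>] 0)
        (𝓝 (N:ℝ)) := by
      have h1 : Tendsto (fun u : ℝ => 1 + u) (𝓝[>] 0) (𝓝 1) := by
        have : Tendsto (fun u : ℝ => 1 + u) (𝓝 0) (𝓝 (1 + 0)) :=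
          (continuous_const.add continuous_id).tendsto 0
        rw [add_zero] at this
        exact this.mono_left nhdsWithin_le_nhds
      have := (h1.mul aux_A_zero).const_mul (N:ℝ)
      simpa [mul_div_assoc] using this
    exact ((((hF.tendsto _).comp hA).const_mul ε).div_const _).add
      (((((hF.tendsto _).comp hB).const_sub _).const_mul (1 - ε)).div_const _)
  · have hA : Tendsto (fun u : ℝ => N * (Real.log (1 + u) / u)) atTop (𝓝 0) := by
      simpa using aux_A_top.const_mul (N:ℝ)
    have hB := aux_B_top.const_mul_atTop hN0
    have h := ((((hF.tendsto _).comp hA).const_mul ε).div_const (Real.Gamma N)).add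
      (((((aux_lower_tendsto N hs).comp hB).const_sub (Real.Gamma N)).const_mul
        (1 - ε)).div_const (Real.Gamma N))
    have h0 : lowerGamma N 0 = 0 := by simp [lowerGamma]
    simpa [h0] using h
  · intro x hx y hy hxy
    have hx' : (0:ℝ) < x := hx
    have hy' : (0:ℝ) < y := hy
    have hlx : 0 < Real.log (1 + x) := Real.log_pos (by linarith)
    have hly : 0 < Real.log (1 + y) := Real.log_pos (by linarith)
    have h1 := aux_lower_mono N hs (a := N * (Real.log (1 + y) / y))
      (b := N * (Real.log (1 + x) / x)) (Set.mem_Ici.2 (by positivity))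
      (Set.mem_Ici.2 (by positivity)) (mul_lt_mul_of_pos_left (aux_A_anti hx hy hxy) hN0)
    have h2 := aux_lower_mono N hs (a := N * ((1 + x) * Real.log (1 + x) / x))
      (b := N * ((1 + y) * Real.log (1 + y) / y)) (Set.mem_Ici.2 (by positivity))
      (Set.mem_Ici.2 (by positivity)) (mul_lt_mul_of_pos_left (aux_B_mono hx hy hxy) hN0)
    have h3 : 0 < 1 - ε := by linarith
    dsimp only
    gcongr
  · have hA : ContinuousOn (fun u : ℝ => N * (Real.log (1 + u) / u)) (Set.Ioi 0) :=
      continuousOn_const.mul (aux_cont_log.div continuousOn_id fun x hx => ne_of_gt hx)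
    have hB : ContinuousOn (fun u : ℝ => N * ((1 + u) * Real.log (1 + u) / u)) (Set.Ioi 0) :=
      continuousOn_const.mul ((((continuous_const.add continuous_id).continuousOn).mul
        aux_cont_log).div continuousOn_id fun x hx => ne_of_gt hx)
    exact ((continuousOn_const.mul (hF.comp_continuousOn hA)).div_const _).add
      ((continuousOn_const.mul (continuousOn_const.sub (hF.comp_continuousOn hB))).div_const _)

/-- Limits of the activity detection error probability `P(β)` as `β → 0⁺` and `β → ∞`,
and existence and uniqueness of the solution of `P(β) = P₀` for thresholds
`P₀ ∈ (0, L₀)`, where `L₀ = ε·γ(N,N)/Γ(N) + (1-ε)·Γ(N,N)/Γ(N)`. -/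
theorem detection_error_limits_and_unique_solution (N : ℕ) (hN : 1 ≤ N) (θ ε : ℝ)
    (hθ : 0 < θ) (hε0 : 0 < ε) (hε1 : ε < 1) :
    Tendsto (fun β : ℝ =>
        ε * lowerGamma N (N * (θ / β) * Real.log (1 + β / θ)) / Real.Gamma N
        + (1 - ε) * upperGamma N (N * (1 + θ / β) * Real.log (1 + β / θ)) / Real.Gamma N)
      (𝓝[>] 0)
      (𝓝 (ε * lowerGamma N N / Real.Gamma N + (1 - ε) * upperGamma N N / Real.Gamma N)) ∧
    Tendsto (fun β : ℝ =>
        ε * lowerGamma N (N * (θ / β) * Real.log (1 + β / θ)) / Real.Gamma N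
        + (1 - ε) * upperGamma N (N * (1 + θ / β) * Real.log (1 + β / θ)) / Real.Gamma N)
      atTop (𝓝 0) ∧
    ∀ P₀ : ℝ, 0 < P₀ →
      P₀ < ε * lowerGamma N N / Real.Gamma N + (1 - ε) * upperGamma N N / Real.Gamma N →
      ∃! β : ℝ, 0 < β ∧
        ε * lowerGamma N (N * (θ / β) * Real.log (1 + β / θ)) / Real.Gamma N
        + (1 - ε) * upperGamma N (N * (1 + θ / β) * Real.log (1 + β / θ)) / Real.Gamma N
        = P₀ := by
  have hs : (1:ℝ) ≤ N := by exact_mod_cast hN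
  obtain ⟨Q, hQ⟩ : ∃ Q : ℝ → ℝ, Q = fun u : ℝ =>
      ε * lowerGamma N (N * (Real.log (1 + u) / u)) / Real.Gamma N
        + (1 - ε) * (Real.Gamma N - lowerGamma N (N * ((1 + u) * Real.log (1 + u) / u)))
          / Real.Gamma N := ⟨_, rfl⟩
  obtain ⟨h0, htop, hanti, hcont⟩ := aux_core N hN ε hε0 hε1 Q hQ
  have key : ∀ β : ℝ, 0 < β →
      ε * lowerGamma N (N * (θ / β) * Real.log (1 + β / θ)) / Real.Gamma N
        + (1 - ε) * upperGamma N (N * (1 + θ / β) * Real.log (1 + β / θ)) / Real.Gamma N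
      = Q (β / θ) := by
    intro β hβ
    have hl : 0 < Real.log (1 + β / θ) := Real.log_pos (by
      have : 0 < β / θ := by positivity
      linarith)
    rw [aux_upper N hs _ (by positivity), hQ]
    have e1 : N * (θ / β) * Real.log (1 + β / θ) = N * (Real.log (1 + β / θ) / (β / θ)) := by
      generalize Real.log (1 + β / θ) = l
      field_simp
    have e2 : N * (1 + θ / β) * Real.log (1 + β / θ)
        = N * ((1 + β / θ) * Real.log (1 + β / θ) / (β / θ)) := by
      generalize Real.log (1 + β / θ) = l
      field_simp
      ring
    rw [e1, e2]
  rw [aux_upper N hs N (by linarith)]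
  have hdiv0 : Tendsto (fun β : ℝ => β / θ) (𝓝[>] 0) (𝓝[>] 0) := by
    refine tendsto_nhdsWithin_iff.2 ⟨?_, ?_⟩
    · have : Tendsto (fun β : ℝ => β / θ) (𝓝 0) (𝓝 (0 / θ)) :=
        (continuous_id.div_const θ).tendsto 0
      rw [zero_div] at this
      exact this.mono_left nhdsWithin_le_nhds
    · filter_upwards [self_mem_nhdsWithin] with β hβ
      exact div_pos hβ hθ
  refine ⟨?_, ?_, ?_⟩
  · refine (h0.comp hdiv0).congr' ?_
    filter_upwards [self_mem_nhdsWithin] with β hβ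
    exact (key β hβ).symm
  · refine (htop.comp (tendsto_id.atTop_div_const hθ)).congr' ?_
    filter_upwards [eventually_gt_atTop 0] with β hβ
    exact (key β hβ).symm
  · intro P₀ hP0 hP1
    obtain ⟨a, ha, ha0⟩ := ((h0.eventually (eventually_gt_nhds hP1)).and
      self_mem_nhdsWithin).exists
    obtain ⟨b, hb, hb0⟩ := ((htop.eventually (eventually_lt_nhds hP0)).and
      (eventually_gt_atTop 0)).exists
    obtain ⟨u, hu, hu'⟩ := isPreconnected_Ioi.intermediate_value (Set.mem_Ioi.2 hb0) ha0 hcont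
      ⟨hb.le, ha.le⟩
    have hu0 : (0:ℝ) < u := hu
    refine ⟨u * θ, ⟨by positivity, ?_⟩, ?_⟩
    · rw [key _ (by positivity), mul_div_cancel_right₀ _ hθ.ne', hu']
    · rintro β ⟨hβ, h⟩
      rw [key β hβ, ← hu'] at h
      have := hanti.injOn (Set.mem_Ioi.2 (div_pos hβ hθ)) hu h
      rw [← this, div_mul_cancel₀ _ hθ.ne']
end

section
/- For every real s > 0 and every real x with 0 ≤ x < s, the lower incomplete gamma function satisfies γ(s, x) ≤ x^s · e^(−x) / (s − x). -/
/-- For `s > 0` and `0 ≤ x < s`, the bound `γ(s,x) ≤ x^s e^(-x)/(s-x)` holds. -/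
theorem lowerGamma_le (s x : ℝ) (hs : 0 < s) (hx0 : 0 ≤ x) (hxs : x < s) :
    lowerGamma s x ≤ x ^ s * Real.exp (-x) / (s - x) := by
  have hpos : 0 < s - x := by linarith
  rw [le_div_iff₀ hpos]
  unfold lowerGamma
  have hint : IntervalIntegrable (fun t : ℝ => t ^ (s - 1) * Real.exp (-t))
      MeasureTheory.volume 0 x :=
    (intervalIntegral.intervalIntegrable_rpow' (by linarith)).mul_continuousOn
      (by fun_prop)
  have hint2 : IntervalIntegrable (fun t : ℝ => t ^ (s - 1) * Real.exp (-t) * (s - t))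
      MeasureTheory.volume 0 x :=
    hint.mul_continuousOn (by fun_prop)
  have hftc : ∫ t in (0:ℝ)..x, t ^ (s - 1) * Real.exp (-t) * (s - t)
      = x ^ s * Real.exp (-x) - (0:ℝ) ^ s * Real.exp (-0) := by
    refine intervalIntegral.integral_eq_sub_of_hasDerivAt_of_le
      (f := fun t : ℝ => t ^ s * Real.exp (-t)) hx0 ?_ ?_ hint2
    · exact ((Real.continuous_rpow_const hs.le).mul (by fun_prop)).continuousOn
    · intro t ht
      have h1 := Real.hasDerivAt_rpow_const (x := t) (p := s) (Or.inl ht.1.ne')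
      have h2 := (hasDerivAt_neg t).exp
      refine (h1.mul h2).congr_deriv ?_
      have h3 : t ^ s = t ^ (s - 1) * t := by
        rw [← Real.rpow_add_one ht.1.ne']; congr 1; ring
      rw [h3]; ring
  rw [Real.zero_rpow hs.ne', zero_mul, sub_zero] at hftc
  rw [← hftc, ← intervalIntegral.integral_mul_const]
  refine intervalIntegral.integral_mono_on hx0 (hint.mul_const _) hint2 ?_
  intro t ht
  have h0 : 0 ≤ t ^ (s - 1) * Real.exp (-t) :=
    mul_nonneg (Real.rpow_nonneg ht.1 _) (Real.exp_pos _).le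
  exact mul_le_mul_of_nonneg_left (by linarith [ht.2]) h0
end
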